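/- arXiv:2510.10698 — 12 statements merged into one kernel-verified Lean document; each statement's English description precedes it below -/
import Mathlib

section
/- For every instance of the asymmetric chore division problem (any number n of agents, any number m of chores, nonnegative additive cost functions, positive entitlements summing to 1), there exists an assignment ⟨S_1,…,S_n⟩ of all the chores to the agents such that V_i(S_i) ≤ 20·WMMS_i for every agent i; that is, a 20-WMMS assignment always exists. -/
open Finset

/-- Cost of a bundle `S` of chores to agent `i`, given per-chore costs `V`. -/
noncomputable def costOf {n m : ℕ} (V : Fin n → Fin m → ℝ) (i : Fin n)
    (S : Finset (Fin m)) : ℝ :=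
  ∑ b ∈ S, V i b

/-- `A` is an `n`-partition of the chores: pairwise disjoint bundles whose union
is the set of all chores. -/
def IsPartition {n m : ℕ} (A : Fin n → Finset (Fin m)) : Prop :=
  (∀ j k, j ≠ k → Disjoint (A j) (A k)) ∧ Finset.univ.biUnion A = Finset.univ

/-- Weighted maximin share of agent `i` under entitlements `w`. -/
noncomputable def WMMS {n m : ℕ} (V : Fin n → Fin m → ℝ) (w : Fin n → ℝ)
    (i : Fin n) : ℝ :=
  sInf { x | ∃ A : Fin n → Finset (Fin m), IsPartition A ∧
    x = ⨆ j, costOf V i (A j) * (w i / w j) }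

/-- Unweighted maximin share of agent `i`. -/
noncomputable def MMS {n m : ℕ} (V : Fin n → Fin m → ℝ) (i : Fin n) : ℝ :=
  sInf { x | ∃ A : Fin n → Finset (Fin m), IsPartition A ∧
    x = ⨆ j, costOf V i (A j) }

/-- Chores larger than `s` for an agent fit into agents of weight larger than `s`. -/
lemma aux_big {n m : ℕ} (w : Fin n → ℝ) (hw : ∀ i, 0 < w i)
    (c : Fin m → ℝ) (hc : ∀ b, 0 ≤ c b) (a : Fin m → Fin n)
    (ha : ∀ j, ∑ b with a b = j, c b ≤ w j) (s : ℝ) (B : Finset (Fin m))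
    (hB : ∀ b ∈ B, s < c b) : ∑ b ∈ B, c b ≤ ∑ j with s < w j, w j := by
  have h1 : ∀ b ∈ B, a b ∈ (univ.filter fun j => s < w j) := by
    intro b hb
    simp only [mem_filter, mem_univ, true_and]
    refine lt_of_lt_of_le (hB b hb) (le_trans ?_ (ha (a b)))
    exact Finset.single_le_sum (f := c) (fun b _ => hc b) (by simp)
  rw [← Finset.sum_fiberwise_of_maps_to h1]
  refine Finset.sum_le_sum fun j _ => le_trans ?_ (ha j)
  exact Finset.sum_le_sum_of_subset_of_nonneg
    (fun b hb => by simp at hb ⊢; exact hb.2) (fun b _ _ => hc b)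

lemma aux_dual {n m : ℕ} (w : Fin n → ℝ) (hw : ∀ i, 0 < w i)
    (c : Fin n → Fin m → ℝ) (hc : ∀ i b, 0 ≤ c i b) (a : Fin n → Fin m → Fin n)
    (ha : ∀ i j, ∑ b with a i b = j, c i b ≤ w j) (z : Fin n → ℝ) (hz : ∀ i, 0 ≤ z i)
    (f0 : Fin m → Fin n) :
    ∀ (N : ℕ) (t : ℝ) (B : Finset (Fin m)) (μ : ℝ), (univ.filter fun j => t < w j).card ≤ N →
      0 ≤ t → (B.card : ℝ) * t ≤ ∑ j with t < w j, w j →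
      ((univ.filter fun j => t < w j) = ∅ → B = ∅) →
      (∀ j, t < w j → μ ≤ z j) →
      ∃ f : Fin m → Fin n, (∀ b ∈ B, c (f b) b ≤ w (f b)) ∧
        ∑ b ∈ B, z (f b) * c (f b) b ≤ ∑ j with t < w j, w j * (8 * z j - 4 * μ) := by
  intro N
  induction N with
  | zero =>
    intro t B μ hN ht hB hE hμ
    have h0 : (univ.filter fun j => t < w j) = ∅ := by simpa using hN
    refine ⟨f0, ?_, ?_⟩
    · rw [hE h0]; simp
    · rw [hE h0, h0]; simp
  | succ N ih =>
    intro t B μ hN ht hB hE hμ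
    by_cases h0 : (univ.filter fun j => t < w j) = ∅
    · refine ⟨f0, ?_, ?_⟩
      · rw [hE h0]; simp
      · rw [hE h0, h0]; simp
    obtain ⟨p, hp, hpmin⟩ := Finset.exists_min_image _ z (Finset.nonempty_iff_ne_empty.2 h0)
    simp only [mem_filter, mem_univ, true_and] at hp hpmin
    set M := z p with hM
    have hM0 : 0 ≤ M := hz p
    have hμM : μ ≤ M := hμ p hp
    obtain ⟨i, hi, himax⟩ := Finset.exists_max_image
      (univ.filter fun j => t < w j ∧ z j ≤ 2 * M) w ⟨p, by simp [hp]; linarith⟩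
    simp only [mem_filter, mem_univ, true_and] at hi himax
    obtain ⟨hti, hzi⟩ := hi
    have hP' : ∀ j, w i < w j → 2 * M ≤ z j := by
      intro j hj
      by_contra hcon
      have := himax j ⟨by linarith, by linarith⟩
      linarith
    have hB2 : ((B.filter fun b => ¬ c i b ≤ w i).card : ℝ) * w i ≤ ∑ j with w i < w j, w j := by
      refine le_trans ?_ (aux_big w hw (c i) (hc i) (a i) (ha i) (w i)
        (B.filter fun b => ¬ c i b ≤ w i) (fun b hb => by simpa using (mem_filter.1 hb).2))
      rw [← nsmul_eq_mul]
      exact Finset.card_nsmul_le_sum _ _ _ (fun b hb => by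
        have := (mem_filter.1 hb).2; linarith)
    have hsub : (univ.filter fun j => w i < w j) ⊂ (univ.filter fun j => t < w j) := by
      rw [Finset.ssubset_iff_of_subset]
      · exact ⟨i, by simp [hti], by simp⟩
      · intro j hj
        simp only [mem_filter, mem_univ, true_and] at hj ⊢
        linarith
    obtain ⟨f, hf1, hf2⟩ := ih (w i) (B.filter fun b => ¬ c i b ≤ w i) (2 * M)
      (by have := Finset.card_lt_card hsub; omega) (hw i).le hB2
      (by
        intro he
        rw [he, Finset.sum_empty] at hB2
        rw [← Finset.card_eq_zero]
        by_contra hne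
        have h1 : (0:ℝ) < ((B.filter fun b => ¬ c i b ≤ w i).card : ℝ) := by
          exact_mod_cast Nat.pos_of_ne_zero hne
        have := mul_pos h1 (hw i)
        linarith) hP'
    have hB1 : ∑ b ∈ B with c i b ≤ w i, c i b ≤ 2 * ∑ j with t < w j, w j := by
      have e1 : ∑ b ∈ B with c i b ≤ w i, c i b ≤ ∑ b ∈ B, c i b :=
        Finset.sum_le_sum_of_subset_of_nonneg (Finset.filter_subset _ _) (fun b _ _ => hc i b)
      have e2 := Finset.sum_filter_add_sum_filter_not B (fun b => c i b ≤ t) (c i)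
      have e3 := aux_big w hw (c i) (hc i) (a i) (ha i) t
        (B.filter fun b => ¬ c i b ≤ t) (fun b hb => by simpa using (mem_filter.1 hb).2)
      have e4 : ∑ b ∈ B with c i b ≤ t, c i b ≤ (B.card : ℝ) * t := by
        calc ∑ b ∈ B with c i b ≤ t, c i b ≤ ∑ b ∈ B with c i b ≤ t, t :=
              Finset.sum_le_sum fun b hb => (mem_filter.1 hb).2
          _ ≤ ∑ b ∈ B, t :=
              Finset.sum_le_sum_of_subset_of_nonneg (Finset.filter_subset _ _) (fun b _ _ => ht)
          _ = (B.card : ℝ) * t := by simp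
      linarith
    refine ⟨fun b => if c i b ≤ w i then i else f b, ?_, ?_⟩
    · intro b hb
      by_cases h : c i b ≤ w i
      · simp [h]
      · simp only [h, if_false]
        exact hf1 b (by simp [hb]; linarith)
    · rw [← Finset.sum_filter_add_sum_filter_not B (fun b => c i b ≤ w i)]
      have g1 : ∑ b ∈ B with c i b ≤ w i, z (if c i b ≤ w i then i else f b) *
          c (if c i b ≤ w i then i else f b) b = z i * ∑ b ∈ B with c i b ≤ w i, c i b := by
        rw [Finset.mul_sum]
        refine Finset.sum_congr rfl fun b hb => ?_
        simp [(mem_filter.1 hb).2]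
      have g2 : ∑ b ∈ B with ¬ c i b ≤ w i, z (if c i b ≤ w i then i else f b) *
          c (if c i b ≤ w i then i else f b) b
          = ∑ b ∈ B with ¬ c i b ≤ w i, z (f b) * c (f b) b := by
        refine Finset.sum_congr rfl fun b hb => ?_
        simp only [(mem_filter.1 hb).2, if_false]
      rw [g1, g2]
      have hS0 : 0 ≤ ∑ b ∈ B with c i b ≤ w i, c i b := Finset.sum_nonneg fun b _ => hc i b
      have g3 : z i * ∑ b ∈ B with c i b ≤ w i, c i b ≤ ∑ j with t < w j, 4 * M * w j := by
        rw [← Finset.mul_sum]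
        calc _ ≤ (2 * M) * (2 * ∑ j with t < w j, w j) :=
              mul_le_mul hzi hB1 hS0 (by linarith)
          _ = _ := by ring
      have g4 : ∑ j with w i < w j, w j * (8 * z j - 4 * (2 * M)) ≤
          ∑ j with t < w j, w j * (8 * z j - 8 * M) := by
        calc _ = ∑ j with w i < w j, w j * (8 * z j - 8 * M) := by
              refine Finset.sum_congr rfl fun j _ => by ring
          _ ≤ _ := Finset.sum_le_sum_of_subset_of_nonneg hsub.1 (by
              intro j hj _
              have := hpmin j (by simpa using hj)
              exact mul_nonneg (hw j).le (by linarith))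
      have g5 : ∑ j with t < w j, 4 * M * w j + ∑ j with t < w j, w j * (8 * z j - 8 * M) ≤
          ∑ j with t < w j, w j * (8 * z j - 4 * μ) := by
        rw [← Finset.sum_add_distrib]
        refine Finset.sum_le_sum fun j _ => ?_
        nlinarith [hw j, mul_le_mul_of_nonneg_left hμM (hw j).le]
      linarith

lemma aux_frac {n m : ℕ} (w : Fin n → ℝ) (hw : ∀ i, 0 < w i)
    (c : Fin n → Fin m → ℝ) 
    (H : ∀ z : Fin n → ℝ, (∀ i, 0 ≤ z i) → ∃ f : Fin m → Fin n, (∀ b, c (f b) b ≤ w (f b)) ∧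
        ∑ b, z (f b) * c (f b) b ≤ 8 * ∑ j, z j * w j) :
    ∃ x : Fin n → Fin m → ℝ, (∀ i b, 0 ≤ x i b) ∧ (∀ b, ∑ i, x i b = 1) ∧
      (∀ i b, w i < c i b → x i b = 0) ∧ ∀ i, ∑ b, x i b * c i b ≤ 8 * w i := by
  classical
  by_contra hcon
  push Not at hcon
  let X : Set (Fin n → Fin m → ℝ) := {x | (∀ i b, 0 ≤ x i b) ∧ (∀ b, ∑ i, x i b = 1) ∧
      (∀ i b, w i < c i b → x i b = 0)}
  let L : (Fin n → Fin m → ℝ) →ₗ[ℝ] (Fin n → ℝ) :=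
    { toFun := fun x i => ∑ b, x i b * c i b
      map_add' := by intro x y; ext i; simp [add_mul, Finset.sum_add_distrib]
      map_smul' := by intro r x; ext i; simp [Finset.mul_sum, mul_assoc] }
  have hXc : Convex ℝ X := by
    rintro x ⟨hx1, hx2, hx3⟩ y ⟨hy1, hy2, hy3⟩ p q hp hq hpq
    refine ⟨fun i b => ?_, fun b => ?_, fun i b h => ?_⟩
    · have := mul_nonneg hp (hx1 i b)
      have := mul_nonneg hq (hy1 i b)
      simp; linarith
    · simp [Finset.sum_add_distrib, ← Finset.mul_sum, hx2, hy2, hpq]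
    · simp [hx3 i b h, hy3 i b h]
  have hXk : IsCompact X := by
    refine IsCompact.of_isClosed_subset (isCompact_Icc (a := (0 : Fin n → Fin m → ℝ)) (b := 1)) ?_ ?_
    · have e : X = (⋂ i, ⋂ b, {x | 0 ≤ x i b}) ∩ ((⋂ b, {x | ∑ i, x i b = 1}) ∩
        (⋂ i, ⋂ b, ⋂ (_ : w i < c i b), {x | x i b = 0})) := by
        ext x; simp [X]
      rw [e]
      refine IsClosed.inter ?_ (IsClosed.inter ?_ ?_)
      · exact isClosed_iInter fun i => isClosed_iInter fun b =>
          isClosed_le (by fun_prop) (by fun_prop)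
      · exact isClosed_iInter fun b => isClosed_eq (by fun_prop) (by fun_prop)
      · exact isClosed_iInter fun i => isClosed_iInter fun b => isClosed_iInter fun _ =>
          isClosed_eq (by fun_prop) (by fun_prop)
    · rintro x ⟨hx1, hx2, hx3⟩
      refine ⟨fun i b => hx1 i b, fun i b => ?_⟩
      have := Finset.single_le_sum (f := fun i => x i b) (fun i _ => hx1 i b) (mem_univ i)
      simp only [hx2] at this
      exact this
  let C : Set (Fin n → ℝ) := {v | ∀ i, v i ≤ 8 * w i}
  have hCc : Convex ℝ C := by
    rintro x hx y hy p q hp hq hpq i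
    have h1 := mul_le_mul_of_nonneg_left (hx i) hp
    have h2 := mul_le_mul_of_nonneg_left (hy i) hq
    have h3 : p * (8 * w i) + q * (8 * w i) = 8 * w i := by rw [← add_mul, hpq, one_mul]
    simp; linarith
  have hCcl : IsClosed C := by
    have e : C = ⋂ i, {v | v i ≤ 8 * w i} := by ext; simp [C]
    rw [e]
    exact isClosed_iInter fun i => isClosed_le (by fun_prop) (by fun_prop)
  have hdisj : Disjoint (L '' X) C := by
    rw [Set.disjoint_left]
    rintro _ ⟨x, ⟨h1, h2, h3⟩, rfl⟩ hC
    obtain ⟨i, hi⟩ := hcon x h1 h2 h3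
    exact absurd (hC i) (not_le.2 hi)
  obtain ⟨φ, u, v, hu, huv, hv⟩ := geometric_hahn_banach_compact_closed (hXc.linear_image L)
    (hXk.image L.continuous_of_finiteDimensional) hCc hCcl hdisj
  have hφ : ∀ y : Fin n → ℝ, φ y = ∑ i, y i * φ (Pi.single i 1) := by
    intro y
    conv_lhs => rw [pi_eq_sum_univ' y]
    rw [map_sum]
    refine Finset.sum_congr rfl fun i _ => ?_
    rw [map_smul, smul_eq_mul]
  have hneg : ∀ i, 0 ≤ - φ (Pi.single i 1) := by
    intro i
    by_contra hlt
    push Not at hlt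
    set d := φ (Pi.single i 1) with hd
    have hd0 : 0 < d := by linarith
    set w8 : Fin n → ℝ := fun i => 8 * w i with hw8
    let r : ℝ := |φ w8 - v| / d
    have hr : 0 ≤ r := by positivity
    have := hv (w8 - r • Pi.single i (1:ℝ)) (by
      intro j
      by_cases h : j = i
      · subst h; simp [hw8, hr]
      · simp [hw8, h])
    rw [map_sub, map_smul, smul_eq_mul, ← hd] at this
    have e : r * d = |φ w8 - v| := by simp only [r]; field_simp
    rw [e] at this
    have := le_abs_self (φ w8 - v)
    linarith
  obtain ⟨f, hf1, hf2⟩ := H (fun i => - φ (Pi.single i 1)) hneg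
  have hx := hu (L (fun i b => if f b = i then 1 else 0)) ⟨_, ⟨by
      intro i b; split_ifs <;> norm_num, by intro b; simp, by
      intro i b h
      have : f b ≠ i := by
        rintro rfl
        linarith [hf1 b]
      simp [this]⟩, rfl⟩
  have hy := hv (fun i => 8 * w i) (fun i => le_rfl)
  rw [hφ] at hx hy
  have e1 : ∑ i, L (fun i b => if f b = i then (1:ℝ) else 0) i * φ (Pi.single i 1)
      = ∑ b, c (f b) b * φ (Pi.single (f b) 1) := by
    simp only [L, LinearMap.coe_mk, AddHom.coe_mk, Finset.sum_mul]
    rw [Finset.sum_comm]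
    refine Finset.sum_congr rfl fun b _ => ?_
    simp
  rw [e1] at hx
  have e2 : ∑ b, (- φ (Pi.single (f b) 1)) * c (f b) b = - ∑ b, c (f b) b * φ (Pi.single (f b) 1) := by
    rw [← Finset.sum_neg_distrib]
    exact Finset.sum_congr rfl fun b _ => by ring
  have e3 : 8 * ∑ j, (- φ (Pi.single j 1)) * w j = - ∑ i, 8 * w i * φ (Pi.single i 1) := by
    rw [← Finset.sum_neg_distrib, Finset.mul_sum]
    exact Finset.sum_congr rfl fun b _ => by ring
  rw [e2, e3] at hf2
  linarith

/-- Size classes. -/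
noncomputable def sizeU (k : ℕ) : ℝ := if k = 0 then 0 else (1/2 : ℝ)^(k-1)

lemma sizeU_nonneg (k : ℕ) : 0 ≤ sizeU k := by
  unfold sizeU; split_ifs <;> positivity

lemma sizeU_sum (K : Finset ℕ) : ∑ k ∈ K, sizeU k ≤ 2 := by
  obtain ⟨N, hN⟩ := K.exists_nat_subset_range
  have h : ∀ N, ∑ k ∈ range (N+1), sizeU k = 2 - 2 * (1/2:ℝ)^N := by
    intro N
    induction N with
    | zero => simp [sizeU]
    | succ N ih =>
      rw [Finset.sum_range_succ, ih]
      simp [sizeU, pow_succ]; ring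
  have h1 : K ⊆ range (N+1) := hN.trans (by intro a; simp; omega)
  have := Finset.sum_le_sum_of_subset_of_nonneg h1 (f := sizeU) (fun k _ _ => sizeU_nonneg k)
  rw [h] at this
  have : (0:ℝ) < (1/2)^N := by positivity
  linarith

lemma sizeU_exists (r : ℝ) (h0 : 0 ≤ r) (h1 : r ≤ 1) : ∃ k, r ≤ sizeU k ∧ sizeU k ≤ 2 * r := by
  rcases h0.eq_or_lt with h | h
  · exact ⟨0, by simp [sizeU, ← h]⟩
  · obtain ⟨k, hk1, hk2⟩ := exists_nat_pow_near_of_lt_one h h1 (y := (1/2:ℝ)) (by norm_num) (by norm_num)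
    refine ⟨k+1, ?_, ?_⟩
    · simpa [sizeU] using hk2
    · rw [pow_succ] at hk1
      simp only [sizeU, Nat.add_eq_zero_iff, one_ne_zero, and_false, if_false, Nat.add_sub_cancel]
      linarith

lemma aux_round {n m : ℕ} (w : Fin n → ℝ) (hw : ∀ i, 0 < w i)
    (c : Fin n → Fin m → ℝ) (hc : ∀ i b, 0 ≤ c i b)
    (x : Fin n → Fin m → ℝ) (hx0 : ∀ i b, 0 ≤ x i b) (hx1 : ∀ b, ∑ i, x i b = 1)
    (hx2 : ∀ i b, w i < c i b → x i b = 0) (hx3 : ∀ i, ∑ b, x i b * c i b ≤ 8 * w i) :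
    ∃ f : Fin m → Fin n, ∀ i, ∑ b with f b = i, c i b ≤ 18 * w i := by
  classical
  have hκ : ∀ i b, ∃ k, c i b ≤ w i → c i b ≤ w i * sizeU k ∧ w i * sizeU k ≤ 2 * c i b := by
    intro i b
    by_cases h : c i b ≤ w i
    · obtain ⟨k, h1, h2⟩ := sizeU_exists (c i b / w i) (div_nonneg (hc i b) (hw i).le)
        ((div_le_one (hw i)).2 h)
      refine ⟨k, fun _ => ?_⟩
      have e : c i b = w i * (c i b / w i) := by have := (hw i).ne'; field_simp
      have p1 := mul_le_mul_of_nonneg_left h1 (hw i).le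
      have p2 := mul_le_mul_of_nonneg_left h2 (hw i).le
      constructor
      · linarith
      · linarith
    · exact ⟨0, fun h' => absurd h' h⟩
  choose κ hκ using hκ
  let X : Fin n × ℕ → ℝ := fun q => ∑ b with κ q.1 b = q.2, x q.1 b
  have hX0 : ∀ q, 0 ≤ X q := fun q => Finset.sum_nonneg fun b _ => hx0 _ _
  let E : Fin m → Finset (Fin n × ℕ) := fun b =>
    (univ.filter fun i => 0 < x i b).image fun i => (i, κ i b)
  let T : Fin m → Finset (Σ _ : Fin n × ℕ, ℕ) := fun b => (E b).sigma fun q => range ⌈X q⌉₊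
  have hall : ∀ s : Finset (Fin m), s.card ≤ (s.biUnion T).card := by
    intro s
    have e : s.biUnion T = (s.biUnion E).sigma fun q => range ⌈X q⌉₊ := by
      ext ⟨q, k⟩
      simp only [T, mem_biUnion, mem_sigma]
      tauto
    rw [e, Finset.card_sigma]
    have h1 : (s.card : ℝ) ≤ ∑ q ∈ s.biUnion E, X q := by
      calc (s.card : ℝ) = ∑ b ∈ s, ∑ i, x i b := by simp [hx1]
        _ ≤ ∑ b ∈ s, ∑ q ∈ s.biUnion E, (if κ q.1 b = q.2 then x q.1 b else 0) := by
          refine Finset.sum_le_sum fun b hb => ?_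
          calc ∑ i, x i b = ∑ i with 0 < x i b, x i b := by
                rw [Finset.sum_filter]
                refine Finset.sum_congr rfl fun i _ => ?_
                split_ifs with h
                · rfl
                · exact le_antisymm (not_lt.1 h) (hx0 i b)
            _ = ∑ q ∈ E b, (if κ q.1 b = q.2 then x q.1 b else 0) := by
                rw [Finset.sum_image (by intro i _ j _ h; exact (Prod.mk.inj h).1)]
                simp
            _ ≤ _ := Finset.sum_le_sum_of_subset_of_nonneg
                (Finset.subset_biUnion_of_mem E hb) (by
                  intro q _ _; split_ifs
                  · exact hx0 _ _
                  · exact le_rfl)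
        _ ≤ ∑ b, ∑ q ∈ s.biUnion E, (if κ q.1 b = q.2 then x q.1 b else 0) := by
          refine Finset.sum_le_sum_of_subset_of_nonneg (Finset.subset_univ _) fun b _ _ =>
            Finset.sum_nonneg fun q _ => ?_
          split_ifs
          · exact hx0 _ _
          · exact le_rfl
        _ = ∑ q ∈ s.biUnion E, X q := by
          rw [Finset.sum_comm]
          refine Finset.sum_congr rfl fun q _ => ?_
          rw [← Finset.sum_filter]
    have h2 : (s.card : ℝ) ≤ ∑ q ∈ s.biUnion E, (⌈X q⌉₊ : ℝ) :=
      h1.trans (Finset.sum_le_sum fun q _ => Nat.le_ceil _)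
    simp only [card_range]
    exact_mod_cast h2
  obtain ⟨g, hg, hgT⟩ := (Finset.all_card_le_biUnion_card_iff_exists_injective T).1 hall
  have hgE : ∀ b, 0 < x (g b).1.1 b ∧ (g b).1.2 = κ (g b).1.1 b := by
    intro b
    have h := (mem_sigma.1 (hgT b)).1
    simp only [E, mem_image, mem_filter, mem_univ, true_and] at h
    obtain ⟨i, hi, he⟩ := h
    rw [← he]
    exact ⟨hi, rfl⟩
  have hgS : ∀ b, (g b).2 < ⌈X (g b).1⌉₊ := fun b => mem_range.1 (mem_sigma.1 (hgT b)).2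
  have hallow : ∀ i b, 0 < x i b → c i b ≤ w i := by
    intro i b h
    by_contra hc'
    rw [hx2 i b (not_le.1 hc')] at h
    exact lt_irrefl _ h
  refine ⟨fun b => (g b).1.1, fun i => ?_⟩
  let K := univ.image (κ i)
  have hcard : ∀ k, (((univ.filter fun b => (g b).1.1 = i).filter fun b => κ i b = k).card : ℝ)
      ≤ X (i, k) + 1 := by
    intro k
    have h1 : ((univ.filter fun b => (g b).1.1 = i).filter fun b => κ i b = k).card
        ≤ (range ⌈X (i, k)⌉₊).card := by
      have hq : ∀ b ∈ ((univ.filter fun b => (g b).1.1 = i).filter fun b => κ i b = k),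
          (g b).1 = (i, k) := by
        intro b hb
        simp only [mem_filter, mem_univ, true_and] at hb
        refine Prod.ext hb.1 ?_
        rw [(hgE b).2, hb.1, hb.2]
      refine Finset.card_le_card_of_injOn (fun b => (g b).2) ?_ ?_
      · intro b hb
        have := hgS b
        rw [hq b hb] at this
        simpa using this
      · intro b hb b' hb' h
        apply hg
        exact Sigma.ext ((hq b hb).trans (hq b' hb').symm) (heq_of_eq h)
    rw [card_range] at h1
    have h2 : (((univ.filter fun b => (g b).1.1 = i).filter fun b => κ i b = k).card : ℝ)
      ≤ (⌈X (i, k)⌉₊ : ℝ) := by exact_mod_cast h1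
    exact h2.trans (Nat.ceil_lt_add_one (hX0 _)).le
  calc ∑ b with (g b).1.1 = i, c i b
      ≤ ∑ b with (g b).1.1 = i, w i * sizeU (κ i b) := by
        refine Finset.sum_le_sum fun b hb => ?_
        have hb' := (mem_filter.1 hb).2
        have := (hgE b).1
        rw [hb'] at this
        exact (hκ i b (hallow i b this)).1
    _ = ∑ k ∈ K, ∑ b ∈ (univ.filter fun b => (g b).1.1 = i) with κ i b = k,
          w i * sizeU (κ i b) := by
        rw [Finset.sum_fiberwise_of_maps_to]
        intro b _; simp [K]
    _ = ∑ k ∈ K, (((univ.filter fun b => (g b).1.1 = i).filter fun b => κ i b = k).card : ℝ) *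
          (w i * sizeU k) := by
        refine Finset.sum_congr rfl fun k _ => ?_
        rw [← nsmul_eq_mul, ← Finset.sum_const]
        refine Finset.sum_congr rfl fun b hb => ?_
        rw [(mem_filter.1 hb).2]
    _ ≤ ∑ k ∈ K, (X (i, k) + 1) * (w i * sizeU k) :=
        Finset.sum_le_sum fun k _ => mul_le_mul_of_nonneg_right (hcard k)
          (mul_nonneg (hw i).le (sizeU_nonneg k))
    _ = ∑ k ∈ K, X (i, k) * (w i * sizeU k) + w i * ∑ k ∈ K, sizeU k := by
        rw [Finset.mul_sum, ← Finset.sum_add_distrib]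
        exact Finset.sum_congr rfl fun k _ => by ring
    _ = ∑ b, x i b * (w i * sizeU (κ i b)) + w i * ∑ k ∈ K, sizeU k := by
        congr 1
        rw [← Finset.sum_fiberwise_of_maps_to (s := univ) (t := K) (g := κ i)
          (by intro b _; simp [K])]
        refine Finset.sum_congr rfl fun k _ => ?_
        simp only [X]
        rw [Finset.sum_mul]
        refine Finset.sum_congr rfl fun b hb => ?_
        rw [(mem_filter.1 hb).2]
    _ ≤ ∑ b, 2 * (x i b * c i b) + w i * 2 := by
        refine add_le_add (Finset.sum_le_sum fun b _ => ?_)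
          (mul_le_mul_of_nonneg_left (sizeU_sum K) (hw i).le)
        rcases (hx0 i b).eq_or_lt with h | h
        · simp [← h]
        · have := mul_le_mul_of_nonneg_left (hκ i b (hallow i b h)).2 h.le
          linarith
    _ ≤ 18 * w i := by
        rw [← Finset.mul_sum]
        linarith [hx3 i]

lemma WMMS_attained {n m : ℕ} (hn : 0 < n) (V : Fin n → Fin m → ℝ) (w : Fin n → ℝ) (i : Fin n) :
    ∃ a : Fin m → Fin n, ∀ j, (∑ b with a b = j, V i b) * (w i / w j) ≤ WMMS V w i := by
  classical
  have hfin : Set.Finite { x | ∃ A : Fin n → Finset (Fin m), IsPartition A ∧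
      x = ⨆ j, costOf V i (A j) * (w i / w j) } := by
    refine (Set.finite_range fun A : Fin n → Finset (Fin m) =>
      ⨆ j, costOf V i (A j) * (w i / w j)).subset ?_
    rintro x ⟨A, _, rfl⟩
    exact ⟨A, rfl⟩
  have hne : Set.Nonempty { x | ∃ A : Fin n → Finset (Fin m), IsPartition A ∧
      x = ⨆ j, costOf V i (A j) * (w i / w j) } := by
    refine ⟨_, fun j => if j = ⟨0, hn⟩ then univ else ∅, ⟨?_, ?_⟩, rfl⟩
    · intro j k hjk
      by_cases h : j = ⟨0, hn⟩
      · have : k ≠ ⟨0, hn⟩ := fun h' => hjk (h.trans h'.symm)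
        simp [this]
      · simp [h]
    · ext b
      simp only [mem_biUnion, mem_univ, true_and, iff_true]
      exact ⟨⟨0, hn⟩, by simp⟩
  obtain ⟨A, ⟨hA1, hA2⟩, hA⟩ := hne.csInf_mem hfin
  have hcov : ∀ b, ∃ j, b ∈ A j := by
    intro b
    have : b ∈ Finset.univ.biUnion A := by rw [hA2]; exact mem_univ b
    simpa using this
  choose a ha using hcov
  refine ⟨a, fun j => ?_⟩
  have e : (univ.filter fun b => a b = j) = A j := by
    ext b
    simp only [mem_filter, mem_univ, true_and]
    constructor
    · rintro rfl; exact ha b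
    · intro h
      by_contra hne
      exact Finset.disjoint_left.1 (hA1 _ _ hne) (ha b) h
  rw [e]
  unfold WMMS
  rw [hA]
  exact le_ciSup (f := fun j => costOf V i (A j) * (w i / w j)) (Set.finite_range _).bddAbove j

/-- every instance of the asymmetric chore division problem admits a
20-WMMS assignment. -/
theorem exists_twenty_WMMS_assignment (n m : ℕ) (V : Fin n → Fin m → ℝ)
    (w : Fin n → ℝ) (hV : ∀ i b, 0 ≤ V i b) (hw : ∀ i, 0 < w i)
    (hw1 : ∀ i, w i ≤ 1) (hsum : ∑ i, w i = 1) :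
    ∃ S : Fin n → Finset (Fin m), IsPartition S ∧
      ∀ i, costOf V i (S i) ≤ 20 * WMMS V w i := by
  classical
  have hn : 0 < n := by
    rcases Nat.eq_zero_or_pos n with h | h
    · subst h; simp at hsum
    · exact h
  have hat := fun i => WMMS_attained hn V w i
  choose a ha using hat
  set M := fun i => WMMS V w i with hMdef
  have hM0 : ∀ i, 0 ≤ M i := by
    intro i
    refine le_trans ?_ (ha i i)
    exact mul_nonneg (Finset.sum_nonneg fun b _ => hV i b) (div_nonneg (hw i).le (hw i).le)
  have hle : ∀ i j, (∑ b with a i b = j, V i b) * w i ≤ M i * w j := by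
    intro i j
    have h := ha i j
    rw [← mul_div_assoc, div_le_iff₀ (hw j)] at h
    exact h
  have hVM : ∀ i b, M i = 0 → V i b = 0 := by
    intro i b h
    have h1 := hle i (a i b)
    rw [h, zero_mul] at h1
    have h2 : V i b ≤ ∑ b' with a i b' = a i b, V i b' :=
      Finset.single_le_sum (f := V i) (fun b _ => hV i b) (by simp)
    have h3 := mul_le_mul_of_nonneg_right h2 (hw i).le
    have h4 : V i b ≤ 0 := by
      by_contra hcon
      have := mul_pos (not_le.1 hcon) (hw i)
      linarith
    exact le_antisymm h4 (hV i b)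
  let c : Fin n → Fin m → ℝ := fun i b => V i b * (w i / M i)
  have hc : ∀ i b, 0 ≤ c i b := fun i b => mul_nonneg (hV i b) (div_nonneg (hw i).le (hM0 i))
  have hca : ∀ i j, ∑ b with a i b = j, c i b ≤ w j := by
    intro i j
    simp only [c]
    rw [← Finset.sum_mul, ← mul_div_assoc]
    rcases (hM0 i).eq_or_lt with h | h
    · rw [← h, div_zero]; exact (hw j).le
    · rw [div_le_iff₀ h, mul_comm (w j)]; exact hle i j
  obtain ⟨x, hx0, hx1, hx2, hx3⟩ := aux_frac w hw c (by
    intro z hz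
    have hall : (univ.filter fun j => (0:ℝ) < w j) = univ := by
      ext j; simp [hw j]
    obtain ⟨f, hf1, hf2⟩ := aux_dual w hw c hc a hca z hz (fun _ => ⟨0, hn⟩) n 0 univ 0
      (by rw [hall]; simp) le_rfl
      (by rw [mul_zero]; exact Finset.sum_nonneg fun j _ => (hw j).le)
      (by
        intro h
        rw [hall] at h
        have := mem_univ (⟨0, hn⟩ : Fin n)
        rw [h] at this
        simp at this)
      (fun j _ => hz j)
    refine ⟨f, fun b => hf1 b (mem_univ b), hf2.trans (le_of_eq ?_)⟩
    rw [hall, Finset.mul_sum]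
    exact Finset.sum_congr rfl fun j _ => by ring)
  obtain ⟨f, hf⟩ := aux_round w hw c hc x hx0 hx1 hx2 hx3
  refine ⟨fun i => univ.filter fun b => f b = i, ⟨?_, ?_⟩, ?_⟩
  · intro j k hjk
    rw [Finset.disjoint_left]
    intro b hb hb'
    exact hjk ((mem_filter.1 hb).2.symm.trans (mem_filter.1 hb').2)
  · ext b; simp
  · intro i
    change ∑ b with f b = i, V i b ≤ 20 * M i
    rcases (hM0 i).eq_or_lt with h | h
    · rw [Finset.sum_eq_zero fun b _ => hVM i b h.symm]
      linarith
    · have h1 := hf i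
      simp only [c] at h1
      rw [← Finset.sum_mul, ← mul_div_assoc, div_le_iff₀ h] at h1
      have h2 : (∑ b with f b = i, V i b) * w i ≤ (18 * M i) * w i := by linarith
      have := le_of_mul_le_mul_right h2 (hw i)
      linarith
end

section
/- Fix n, m, an entitlement vector w, and α ≥ 1. Call an instance sorted if, under a common indexing b_1,…,b_m of the chores, V_i({b_1}) ≤ V_i({b_2}) ≤ … ≤ V_i({b_m}) holds for every agent i. If every sorted instance with n agents, m chores, and entitlements w admits an α-WMMS assignment, then every instance with n agents, m chores, and entitlements w admits an α-WMMS assignment. -/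
open Finset

lemma isPartition_image {n m : ℕ} {A : Fin n → Finset (Fin m)} (hA : IsPartition A)
    (g : Fin m → Fin m) (hg : Function.Injective g) :
    IsPartition (fun j => (A j).image g) := by
  refine ⟨fun j k hjk => (Finset.disjoint_image hg).2 (hA.1 j k hjk), ?_⟩
  ext b
  obtain ⟨a, rfl⟩ := Finite.surjective_of_injective hg b
  have ha : a ∈ Finset.univ.biUnion A := by rw [hA.2]; exact Finset.mem_univ a
  obtain ⟨j, -, hj⟩ := Finset.mem_biUnion.1 ha
  simp only [Finset.mem_biUnion, Finset.mem_univ, true_and, iff_true]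
  exact ⟨j, Finset.mem_image_of_mem g hj⟩

lemma wmms_sorted_le {n m : ℕ} (V : Fin n → Fin m → ℝ) (w : Fin n → ℝ)
    (hw : ∀ i, 0 < w i) (hV : ∀ i b, 0 ≤ V i b) (σ : Fin n → Equiv.Perm (Fin m))
    (S : Fin n → Finset (Fin m)) (hS : IsPartition S) (i : Fin n) :
    WMMS (fun i b => V i (σ i b)) w i ≤ WMMS V w i := by
  unfold WMMS
  apply csInf_le_csInf
  · refine ⟨0, ?_⟩
    rintro x ⟨A, -, rfl⟩
    exact Real.iSup_nonneg fun j => mul_nonneg (Finset.sum_nonneg fun b _ => hV _ _)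
      (div_nonneg (hw _).le (hw _).le)
  · exact ⟨_, S, hS, rfl⟩
  · rintro x ⟨A, hA, rfl⟩
    refine ⟨_, isPartition_image hA (σ i).symm (σ i).symm.injective, ?_⟩
    congr 1
    funext j
    congr 1
    unfold costOf
    rw [Finset.sum_image (fun a _ b _ h => (σ i).symm.injective h)]
    simp

lemma exists_pick {n m : ℕ} (V : Fin n → Fin m → ℝ) (σ : Fin n → Equiv.Perm (Fin m))
    (hσ : ∀ i, Monotone (fun b => V i (σ i b))) (o : Fin m → Fin n) :
    ∃ g : Fin m → Fin m, Function.Injective g ∧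
      ∀ j, V (o j) (g j) ≤ V (o j) (σ (o j) j) := by
  classical
  obtain ⟨g, hg, h⟩ := (Finset.all_card_le_biUnion_card_iff_exists_injective
    (fun j : Fin m => (Finset.Iic j).image (σ (o j)))).1 (by
      intro J
      rcases J.eq_empty_or_nonempty with rfl | hJ
      · simp
      · calc J.card ≤ (Finset.Iic (J.max' hJ)).card :=
              Finset.card_le_card fun a ha => Finset.mem_Iic.2 (J.le_max' a ha)
          _ = ((Finset.Iic (J.max' hJ)).image (σ (o (J.max' hJ)))).card :=
              (Finset.card_image_of_injective _ (σ _).injective).symm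
          _ ≤ _ := Finset.card_le_card (Finset.subset_biUnion_of_mem
              (fun j : Fin m => (Finset.Iic j).image (σ (o j))) (J.max'_mem hJ)))
  refine ⟨g, hg, fun j => ?_⟩
  obtain ⟨a, ha, hag⟩ := Finset.mem_image.1 (h j)
  rw [← hag]
  exact hσ (o j) (Finset.mem_Iic.1 ha)

/-- if every sorted instance (with `n` agents, `m` chores,
entitlements `w`) admits an `α`-WMMS assignment, then every instance with these
parameters admits an `α`-WMMS assignment. -/
theorem alpha_WMMS_of_sorted (n m : ℕ) (w : Fin n → ℝ) (α : ℝ) (hα : 1 ≤ α)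
    (hw : ∀ i, 0 < w i) (hw1 : ∀ i, w i ≤ 1) (hsum : ∑ i, w i = 1)
    (hsorted : ∀ V : Fin n → Fin m → ℝ, (∀ i b, 0 ≤ V i b) →
      (∀ i, Monotone (V i)) →
      ∃ S : Fin n → Finset (Fin m), IsPartition S ∧
        ∀ i, costOf V i (S i) ≤ α * WMMS V w i) :
    ∀ V : Fin n → Fin m → ℝ, (∀ i b, 0 ≤ V i b) →
      ∃ S : Fin n → Finset (Fin m), IsPartition S ∧
        ∀ i, costOf V i (S i) ≤ α * WMMS V w i := by
  intro V hV
  let σ : Fin n → Equiv.Perm (Fin m) := fun i => Tuple.sort (V i)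
  have hσ : ∀ i, Monotone (fun b => V i (σ i b)) := fun i => Tuple.monotone_sort (V i)
  obtain ⟨S, hS, hc⟩ := hsorted (fun i b => V i (σ i b)) (fun i b => hV _ _) hσ
  have ho : ∀ b, ∃ j, b ∈ S j := by
    intro b
    have hb : b ∈ Finset.univ.biUnion S := by rw [hS.2]; exact Finset.mem_univ b
    simpa using hb
  choose o ho using ho
  obtain ⟨g, hg, hle⟩ := exists_pick V σ hσ o
  refine ⟨_, isPartition_image hS g hg, fun i => ?_⟩
  calc costOf V i ((S i).image g) = ∑ b ∈ S i, V i (g b) := by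
        unfold costOf
        rw [Finset.sum_image (fun a _ b _ h => hg h)]
    _ ≤ ∑ b ∈ S i, V i (σ i b) := by
        refine Finset.sum_le_sum fun b hb => ?_
        have hi : o b = i := by
          by_contra hne
          exact Finset.disjoint_left.1 (hS.1 _ _ hne) (ho b) hb
        have := hle b
        rwa [hi] at this
    _ ≤ α * WMMS (fun i b => V i (σ i b)) w i := hc i
    _ ≤ α * WMMS V w i :=
        mul_le_mul_of_nonneg_left (wmms_sorted_le V w hw hV σ S hS i) (by linarith)
end

section
/- Let α ≥ 1. Suppose that every entitlement-divisible instance of the asymmetric chore division problem (i.e., every instance in which max{w'_i/w'_j, w'_j/w'_i} is an integer for every pair of agents i, j) admits an α-WMMS assignment. Then every instance of the asymmetric chore division problem admits a 2α-WMMS assignment. -/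
open Finset

/-- if every entitlement-divisible instance admits an `α`-WMMS
assignment, then every instance admits a `2α`-WMMS assignment. -/
theorem two_alpha_WMMS_of_entitlementDivisible (α : ℝ) (hα : 1 ≤ α)
    (hdiv : ∀ (n m : ℕ) (V : Fin n → Fin m → ℝ) (w : Fin n → ℝ),
      (∀ i b, 0 ≤ V i b) → (∀ i, 0 < w i) → (∀ i, w i ≤ 1) → (∑ i, w i = 1) →
      (∀ i j, ∃ k : ℤ, max (w i / w j) (w j / w i) = (k : ℝ)) →
      ∃ S : Fin n → Finset (Fin m), IsPartition S ∧
        ∀ i, costOf V i (S i) ≤ α * WMMS V w i) :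
    ∀ (n m : ℕ) (V : Fin n → Fin m → ℝ) (w : Fin n → ℝ),
      (∀ i b, 0 ≤ V i b) → (∀ i, 0 < w i) → (∀ i, w i ≤ 1) → (∑ i, w i = 1) →
      ∃ S : Fin n → Finset (Fin m), IsPartition S ∧
        ∀ i, costOf V i (S i) ≤ 2 * α * WMMS V w i := by
  intro n m V w hV hw hw1 hsum
  have hex : ∀ i, ∃ a : ℤ, w i ∈ Set.Ioc ((2:ℝ) ^ a) (2 ^ (a + 1)) := fun i =>
    exists_mem_Ioc_zpow (hw i) (by norm_num)
  choose a ha using hex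
  have hn : 0 < n := by
    rcases Nat.eq_zero_or_pos n with h | h
    · subst h
      simp at hsum
    · exact h
  have : Nonempty (Fin n) := ⟨⟨0, hn⟩⟩
  set T : ℝ := ∑ i, (2:ℝ) ^ (a i) with hT
  have hp : ∀ i, 0 < (2:ℝ) ^ (a i) := fun i => by positivity
  have hTpos : 0 < T := Finset.sum_pos (fun i _ => hp i) Finset.univ_nonempty
  have hratio : ∀ i j, (2:ℝ) ^ (a i) / T / ((2:ℝ) ^ (a j) / T) = 2 ^ (a i - a j) := by
    intro i j
    rw [div_div_div_cancel_right₀ hTpos.ne', zpow_sub₀ (by norm_num)]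
  obtain ⟨S, hS, hSc⟩ := hdiv n m V (fun i => (2:ℝ) ^ (a i) / T) hV
    (fun i => div_pos (hp i) hTpos)
    (fun i => (div_le_one hTpos).2
      (Finset.single_le_sum (f := fun i => (2:ℝ) ^ (a i)) (fun j _ => (hp j).le)
        (Finset.mem_univ i)))
    (by rw [← Finset.sum_div]; exact div_self hTpos.ne')
    (by
      intro i j
      simp only [hratio]
      rcases le_total (a i) (a j) with h | h
      · refine ⟨2 ^ (a j - a i).toNat, ?_⟩
        rw [max_eq_right (zpow_le_zpow_right₀ (by norm_num) (by omega))]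
        push_cast
        rw [← zpow_natCast, Int.toNat_of_nonneg (by omega)]
      · refine ⟨2 ^ (a i - a j).toNat, ?_⟩
        rw [max_eq_left (zpow_le_zpow_right₀ (by norm_num) (by omega))]
        push_cast
        rw [← zpow_natCast, Int.toNat_of_nonneg (by omega)])
  refine ⟨S, hS, fun i => (hSc i).trans ?_⟩
  have key : WMMS V (fun i => (2:ℝ) ^ (a i) / T) i / 2 ≤ WMMS V w i := by
    refine le_csInf ⟨_, S, hS, rfl⟩ ?_
    rintro x ⟨A, hA, rfl⟩
    rw [div_le_iff₀ (by norm_num)]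
    refine le_trans (b := ⨆ j, costOf V i (A j) *
      ((2:ℝ) ^ (a i) / T / ((2:ℝ) ^ (a j) / T))) (csInf_le ?_ ⟨A, hA, rfl⟩) ?_
    · refine ⟨0, ?_⟩
      rintro x ⟨B, hB, rfl⟩
      refine Real.iSup_nonneg fun j => mul_nonneg (Finset.sum_nonneg fun b _ => hV i b) ?_
      have := hp i
      have := hp j
      positivity
    · refine ciSup_le fun j => ?_
      have h1 : costOf V i (A j) * (w i / w j) ≤ ⨆ j, costOf V i (A j) * (w i / w j) :=
        le_ciSup (f := fun j => costOf V i (A j) * (w i / w j)) (Set.finite_range _).bddAbove j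
      have h2 : (2:ℝ) ^ (a i) / T / ((2:ℝ) ^ (a j) / T) ≤ w i / w j * 2 := by
        rw [div_div_div_cancel_right₀ hTpos.ne', div_mul_eq_mul_div,
          div_le_div_iff₀ (hp j) (hw j)]
        have e1 := (ha i).1
        have e2 := (ha j).2
        rw [zpow_add_one₀ (by norm_num)] at e2
        have := hp i
        have := hp j
        have := hw i
        nlinarith [mul_le_mul e1.le e2 (hw j).le (hw i).le]
      have h0 : 0 ≤ costOf V i (A j) := Finset.sum_nonneg fun b _ => hV i b
      have := mul_le_mul_of_nonneg_left h2 h0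
      linarith
  nlinarith
end

section
/- Consider an instance of the asymmetric chore division problem whose chores are indexed b_1,…,b_m with V_i({b_1}) ≤ V_i({b_2}) ≤ … ≤ V_i({b_m}) for every agent i, whose entitlements satisfy w_1 ≤ w_2 ≤ … ≤ w_n, and which is normalized so that WMMS_i = w_i for every agent i. Let p ∈ {1,…,n} and s ∈ {1,…,m}. If m − s ≥ (∑_{j>p} w_j)/w_p, then V_i({b_s}) ≤ w_p holds for every agent i. -/
open Finset

/-- Lemma 3: in a sorted, entitlement-sorted, normalized instance
(`WMMSᵢ = wᵢ` for all `i`), if `m − s ≥ (∑_{j>p} wⱼ)/w_p` (where `s` ranges over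
`{1,…,m}`, represented by the chore `bs : Fin m` with 1-based index `bs+1`),
then `Vᵢ({b_s}) ≤ w_p` for every agent `i`. -/
theorem cost_single_chore_le (n m : ℕ) (V : Fin n → Fin m → ℝ) (w : Fin n → ℝ)
    (hV : ∀ i b, 0 ≤ V i b) (hw : ∀ i, 0 < w i) (hw1 : ∀ i, w i ≤ 1)
    (hsum : ∑ i, w i = 1)
    (hVsorted : ∀ i, Monotone (V i)) (hwsorted : Monotone w)
    (hnorm : ∀ i, WMMS V w i = w i)
    (p : Fin n) (bs : Fin m)
    (hs : (m : ℝ) - ((bs : ℕ) + 1) ≥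
      (∑ j ∈ Finset.univ.filter (fun j => p < j), w j) / w p) :
    ∀ i, V i bs ≤ w p := by
  intro i
  by_contra! hcon
  have hfin : { x | ∃ A : Fin n → Finset (Fin m), IsPartition A ∧
      x = ⨆ j, costOf V i (A j) * (w i / w j) }.Finite := by
    refine (Set.finite_range (fun A : Fin n → Finset (Fin m) =>
      ⨆ j, costOf V i (A j) * (w i / w j))).subset ?_
    rintro x ⟨A, _, rfl⟩
    exact ⟨A, rfl⟩
  have hne : { x | ∃ A : Fin n → Finset (Fin m), IsPartition A ∧
      x = ⨆ j, costOf V i (A j) * (w i / w j) }.Nonempty := by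
    by_contra h
    rw [Set.not_nonempty_iff_eq_empty] at h
    have h1 := hnorm i
    unfold WMMS at h1
    rw [h, Real.sInf_empty] at h1
    exact absurd h1 (hw i).ne
  obtain ⟨A, ⟨hdis, hun⟩, hA⟩ := hne.csInf_mem hfin
  have hwi : w i = ⨆ j, costOf V i (A j) * (w i / w j) := by
    rw [← hA]; exact (hnorm i).symm
  have hle : ∀ j, costOf V i (A j) ≤ w j := by
    intro j
    have h1 : costOf V i (A j) * (w i / w j) ≤ w i := by
      conv_rhs => rw [hwi]
      exact le_ciSup (f := fun j => costOf V i (A j) * (w i / w j))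
        (Set.finite_range _).bddAbove j
    have hi := hw i
    have hj := hw j
    rw [← mul_div_assoc, div_le_iff₀ hj, mul_comm (w i)] at h1
    exact le_of_mul_le_mul_right h1 hi
  have hsub : Finset.Ici bs ⊆ (Finset.univ.filter (fun j => p < j)).biUnion A := by
    intro b hb
    have hb' : bs ≤ b := Finset.mem_Ici.mp hb
    have hbu : b ∈ Finset.univ.biUnion A := by rw [hun]; exact Finset.mem_univ b
    obtain ⟨j, _, hj⟩ := Finset.mem_biUnion.mp hbu
    refine Finset.mem_biUnion.mpr ⟨j, ?_, hj⟩
    rw [Finset.mem_filter]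
    refine ⟨Finset.mem_univ j, ?_⟩
    by_contra! hjp
    have h1 : V i b ≤ costOf V i (A j) :=
      Finset.single_le_sum (f := V i) (fun c _ => hV i c) hj
    linarith [hle j, hwsorted hjp, hVsorted i hb']
  have h1 : ∑ b ∈ Finset.Ici bs, V i b ≤
      ∑ j ∈ Finset.univ.filter (fun j => p < j), w j := by
    calc _ ≤ ∑ b ∈ (Finset.univ.filter (fun j => p < j)).biUnion A, V i b :=
          Finset.sum_le_sum_of_subset_of_nonneg hsub (fun c _ _ => hV i c)
      _ = ∑ j ∈ Finset.univ.filter (fun j => p < j), costOf V i (A j) :=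
          Finset.sum_biUnion (fun j _ k _ hjk => hdis j k hjk)
      _ ≤ _ := Finset.sum_le_sum (fun j _ => hle j)
  have h2 : ((m : ℝ) - (bs : ℕ)) * w p ≤ ∑ b ∈ Finset.Ici bs, V i b := by
    have h3 := Finset.card_nsmul_le_sum (Finset.Ici bs) (V i) (w p)
      (fun b hb => hcon.le.trans (hVsorted i (Finset.mem_Ici.mp hb)))
    rw [Fin.card_Ici, nsmul_eq_mul, Nat.cast_sub bs.isLt.le] at h3
    exact h3
  have hp := hw p
  rw [ge_iff_le, div_le_iff₀ hp] at hs
  linarith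
end

section
/- Consider an instance of the asymmetric chore division problem whose entitlements satisfy w_1 ≤ w_2 ≤ … ≤ w_n, and let i be an agent with WMMS_i = w_i. Let p ∈ {1,…,n}, and let S be any set of chores such that every chore b ∈ S has V_i({b}) > w_p. Then V_i(S) ≤ ∑_{j>p} w_j. -/
open Finset

/-- with sorted entitlements and an agent `i` with `WMMSᵢ = wᵢ`, any
set `S` of chores each of which costs more than `w_p` to agent `i` has total cost
at most `∑_{j>p} wⱼ`. -/
theorem cost_expensive_chores_le (n m : ℕ) (V : Fin n → Fin m → ℝ)
    (w : Fin n → ℝ) (hV : ∀ i b, 0 ≤ V i b) (hw : ∀ i, 0 < w i)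
    (hw1 : ∀ i, w i ≤ 1) (hsum : ∑ i, w i = 1) (hwsorted : Monotone w)
    (i : Fin n) (hnorm : WMMS V w i = w i)
    (p : Fin n) (S : Finset (Fin m)) (hS : ∀ b ∈ S, w p < V i b) :
    costOf V i S ≤ ∑ j ∈ Finset.univ.filter (fun j => p < j), w j := by
  classical
  have hfin : Set.Finite { x | ∃ A : Fin n → Finset (Fin m), IsPartition A ∧
      x = ⨆ j, costOf V i (A j) * (w i / w j) } := by
    refine (Set.finite_range (fun A : Fin n → Finset (Fin m) =>
      ⨆ j, costOf V i (A j) * (w i / w j))).subset ?_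
    rintro x ⟨A, -, rfl⟩
    exact ⟨A, rfl⟩
  have hne : Set.Nonempty { x | ∃ A : Fin n → Finset (Fin m), IsPartition A ∧
      x = ⨆ j, costOf V i (A j) * (w i / w j) } := by
    refine ⟨_, fun j => if j = i then Finset.univ else ∅, ⟨?_, ?_⟩, rfl⟩
    · intro j k hjk
      by_cases hj : j = i
      · have hk : k ≠ i := fun h => hjk (hj.trans h.symm)
        simp [hk]
      · simp [hj]
    · ext b
      simp only [Finset.mem_biUnion, Finset.mem_univ, true_and, iff_true]
      exact ⟨i, by simp⟩
  obtain ⟨A, ⟨hdis, hun⟩, hA⟩ := hne.csInf_mem hfin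
  have hA' : w i = ⨆ j, costOf V i (A j) * (w i / w j) := hnorm.symm.trans hA
  have hle : ∀ j, costOf V i (A j) ≤ w j := by
    intro j
    have h1 : costOf V i (A j) * (w i / w j) ≤ w i := by
      exact (le_ciSup (f := fun j => costOf V i (A j) * (w i / w j))
        (Set.finite_range _).bddAbove j).trans hA'.ge
    have hi := hw i
    have hj := hw j
    rw [← mul_div_assoc, div_le_iff₀ hj, mul_comm] at h1
    exact le_of_mul_le_mul_left h1 hi
  have hsub : S ⊆ (Finset.univ.filter (fun j => p < j)).biUnion A := by
    intro b hb
    have hbu : b ∈ Finset.univ.biUnion A := by rw [hun]; exact Finset.mem_univ b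
    obtain ⟨j, -, hj⟩ := Finset.mem_biUnion.1 hbu
    refine Finset.mem_biUnion.2 ⟨j, ?_, hj⟩
    simp only [Finset.mem_filter, Finset.mem_univ, true_and]
    by_contra hpj
    have h1 : V i b ≤ costOf V i (A j) :=
      Finset.single_le_sum (f := fun b => V i b) (fun c _ => hV i c) hj
    have h2 := hwsorted (not_lt.1 hpj)
    have h3 := hS b hb
    have h4 := hle j
    linarith
  calc costOf V i S
      ≤ ∑ b ∈ (Finset.univ.filter (fun j => p < j)).biUnion A, V i b :=
        Finset.sum_le_sum_of_subset_of_nonneg hsub (fun c _ _ => hV i c)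
    _ = ∑ j ∈ Finset.univ.filter (fun j => p < j), ∑ b ∈ A j, V i b :=
        Finset.sum_biUnion (fun j _ k _ hjk => hdis j k hjk)
    _ ≤ _ := Finset.sum_le_sum (fun j _ => hle j)
end

section
/- In any instance of the asymmetric chore division problem, the assignment that gives the entire set of chores to an agent with maximum entitlement and nothing to all other agents is a (1/max_{j} w_j)-WMMS assignment. In particular, every instance admits a (1/max_{j} w_j)-WMMS assignment. -/
open Finset

/-- giving all chores to an agent of maximum entitlement (and nothing
to the others) is a `(1 / max_j w_j)`-WMMS assignment; in particular such an
assignment always exists. -/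
theorem all_to_max_entitlement_WMMS (n m : ℕ) (V : Fin n → Fin m → ℝ)
    (w : Fin n → ℝ) (hV : ∀ i b, 0 ≤ V i b) (hw : ∀ i, 0 < w i)
    (hw1 : ∀ i, w i ≤ 1) (hsum : ∑ i, w i = 1) :
    (∀ i0 : Fin n, (∀ j, w j ≤ w i0) →
      IsPartition (fun j => if j = i0 then (Finset.univ : Finset (Fin m)) else ∅) ∧
      ∀ i, costOf V i (if i = i0 then (Finset.univ : Finset (Fin m)) else ∅) ≤
        (1 / ⨆ j, w j) * WMMS V w i) ∧
    ∃ S : Fin n → Finset (Fin m), IsPartition S ∧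
      ∀ i, costOf V i (S i) ≤ (1 / ⨆ j, w j) * WMMS V w i := by
  have key : ∀ i, w i * costOf V i Finset.univ ≤ WMMS V w i := by
    intro i
    unfold WMMS
    apply le_csInf
    · refine ⟨_, fun j => if j = i then Finset.univ else ∅, ⟨?_, ?_⟩, rfl⟩
      · intro j k hjk
        by_cases hj : j = i
        · have hk : k ≠ i := fun h => hjk (hj.trans h.symm)
          simp [hk]
        · simp [hj]
      · ext b
        simp only [Finset.mem_biUnion, Finset.mem_univ, true_and, iff_true]
        exact ⟨i, by simp⟩
    · rintro x ⟨A, ⟨hd, hu⟩, rfl⟩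
      set M := ⨆ j, costOf V i (A j) * (w i / w j) with hM
      have h1 : ∀ j, costOf V i (A j) * w i ≤ M * w j := by
        intro j
        have h := le_ciSup (f := fun j => costOf V i (A j) * (w i / w j))
          (Set.finite_range _).bddAbove j
        have h2 := mul_le_mul_of_nonneg_right h (hw j).le
        have h3 : costOf V i (A j) * (w i / w j) * w j = costOf V i (A j) * w i := by
          have := (hw j).ne'
          field_simp
        simp only [h3] at h2
        exact h2
      have h4 : costOf V i Finset.univ = ∑ j, costOf V i (A j) := by
        unfold costOf
        rw [← hu, Finset.sum_biUnion]
        intro j _ k _ hjk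
        exact hd j k hjk
      calc w i * costOf V i Finset.univ = ∑ j, costOf V i (A j) * w i := by
            rw [h4, mul_comm, Finset.sum_mul]
        _ ≤ ∑ j, M * w j := Finset.sum_le_sum fun j _ => h1 j
        _ = M := by rw [← Finset.mul_sum, hsum, mul_one]
  have main : ∀ i0 : Fin n, (∀ j, w j ≤ w i0) →
      IsPartition (fun j => if j = i0 then (Finset.univ : Finset (Fin m)) else ∅) ∧
      ∀ i, costOf V i (if i = i0 then (Finset.univ : Finset (Fin m)) else ∅) ≤
        (1 / ⨆ j, w j) * WMMS V w i := by
    intro i0 h0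
    have : Nonempty (Fin n) := ⟨i0⟩
    have hsup : ⨆ j, w j = w i0 :=
      le_antisymm (ciSup_le h0) (le_ciSup (Set.finite_range w).bddAbove i0)
    refine ⟨⟨?_, ?_⟩, ?_⟩
    · intro j k hjk
      by_cases hj : j = i0
      · have hk : k ≠ i0 := fun h => hjk (hj.trans h.symm)
        simp [hk]
      · simp [hj]
    · ext b
      simp only [Finset.mem_biUnion, Finset.mem_univ, true_and, iff_true]
      exact ⟨i0, by simp⟩
    · intro i
      rw [hsup, one_div, inv_mul_eq_div, le_div_iff₀ (hw i0)]
      by_cases hi : i = i0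
      · subst hi
        simpa [mul_comm] using key i
      · have hc : 0 ≤ costOf V i Finset.univ := Finset.sum_nonneg fun b _ => hV i b
        have := (mul_nonneg (hw i).le hc).trans (key i)
        simpa [hi, costOf] using this
  refine ⟨main, ?_⟩
  have hne : Nonempty (Fin n) := by
    by_contra h
    rw [not_nonempty_iff] at h
    simp at hsum
  obtain ⟨i0, h0⟩ := Finite.exists_max w
  exact ⟨_, main i0 h0⟩
end

section
/- Let w_1, w_2, …, w_n be the entitlements of n agents. Suppose the agents are partitioned into n' disjoint groups and, for each group i ∈ {1,…,n'}, let i* ∈ {1,…,n} be the index of a designated representative agent, where the representatives 1*, 2*, …, n'* are pairwise distinct (a representative need not belong to its group). Let α > 1 and assume ∑_{j ∈ group i} w_j ≤ α·w_{i*} for each group i. Set β = 1/(∑_{i=1}^{n'} w_{i*}) and let γ ≥ 1. If every instance of the chore division problem with n' agents and entitlements (β·w_{1*}, …, β·w_{n'*}) admits a γ-WMMS assignment, then every instance with n agents and entitlements (w_1, …, w_n) admits an (α·γ)-WMMS assignment. -/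
open Finset

/-- Lemma red1: grouping agents with distinct representatives, if
group sums are at most `α·w_{i*}` and the reduced instance (entitlements
`β·w_{i*}`) always admits a `γ`-WMMS assignment, then the original entitlements
always admit an `(α·γ)`-WMMS assignment. Groups are the fibers of `g`. -/
theorem group_reduction_WMMS (n n' : ℕ) (w : Fin n → ℝ)
    (hw : ∀ i, 0 < w i) (hw1 : ∀ i, w i ≤ 1) (hsum : ∑ i, w i = 1)
    (g : Fin n → Fin n') (rep : Fin n' → Fin n)
    (hrep : Function.Injective rep)
    (α : ℝ) (hα : 1 < α)
    (hgroup : ∀ i : Fin n',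
      ∑ j ∈ Finset.univ.filter (fun j => g j = i), w j ≤ α * w (rep i))
    (β : ℝ) (hβ : β = 1 / ∑ i : Fin n', w (rep i))
    (γ : ℝ) (hγ : 1 ≤ γ)
    (hreduced : ∀ (m : ℕ) (V : Fin n' → Fin m → ℝ), (∀ i b, 0 ≤ V i b) →
      ∃ S : Fin n' → Finset (Fin m), IsPartition S ∧
        ∀ i, costOf V i (S i) ≤ γ * WMMS V (fun i => β * w (rep i)) i) :
    ∀ (m : ℕ) (V : Fin n → Fin m → ℝ), (∀ i b, 0 ≤ V i b) →
      ∃ S : Fin n → Finset (Fin m), IsPartition S ∧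
        ∀ i, costOf V i (S i) ≤ α * γ * WMMS V w i := by
  intro m V hV
  have hαpos : 0 < α := by linarith
  have hn : Nonempty (Fin n) := by
    by_contra h
    rw [not_nonempty_iff] at h
    simp at hsum
  have hcost : ∀ i (S : Finset (Fin m)), 0 ≤ costOf V i S := fun i S =>
    Finset.sum_nonneg fun b _ => hV i b
  have hterm : ∀ i j (S : Finset (Fin m)), 0 ≤ costOf V i S * (w i / w j) := fun i j S =>
    mul_nonneg (hcost i S) (div_nonneg (hw i).le (hw j).le)
  have hW0 : ∀ i, 0 ≤ WMMS V w i := by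
    intro i
    apply Real.sInf_nonneg
    rintro x ⟨A, -, rfl⟩
    exact Real.iSup_nonneg fun j => hterm i j _
  let V' : Fin n' → Fin m → ℝ := fun i => V (rep i)
  have hβi : ∀ i : Fin n', 0 < β := by
    intro i
    rw [hβ]
    exact one_div_pos.mpr (Finset.sum_pos (fun k _ => hw _) ⟨i, Finset.mem_univ _⟩)
  have key : ∀ i, WMMS V' (fun i => β * w (rep i)) i ≤ α * WMMS V w (rep i) := by
    intro i
    have hb := hβi i
    have hne : Nonempty (Fin n') := ⟨i⟩
    rw [mul_comm, ← div_le_iff₀ hαpos]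
    apply le_csInf
    · obtain ⟨a⟩ := hn
      refine ⟨_, fun j => if j = a then Finset.univ else ∅, ⟨?_, ?_⟩, rfl⟩
      · intro j k hjk
        by_cases h1 : j = a
        · have h2 : k ≠ a := fun h => hjk (h1.trans h.symm)
          simp [h2]
        · simp [h1]
      · ext b
        simp only [Finset.mem_biUnion, Finset.mem_univ, true_and, iff_true]
        exact ⟨a, by simp⟩
    · rintro x ⟨A, ⟨hA1, hA2⟩, hx⟩
      have hAx : ∀ j, costOf V (rep i) (A j) * (w (rep i) / w j) ≤ x := by
        intro j
        rw [hx]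
        exact le_ciSup (f := fun j => costOf V (rep i) (A j) * (w (rep i) / w j))
          (Set.finite_range _).bddAbove j
      have hx0 : 0 ≤ x := (hterm (rep i) (rep i) _).trans (hAx _)
      rw [div_le_iff₀ hαpos]
      let B : Fin n' → Finset (Fin m) := fun k =>
        (Finset.univ.filter (fun j => g j = k)).biUnion A
      have hB : IsPartition B := by
        constructor
        · intro k l hkl
          rw [Finset.disjoint_biUnion_left]
          intro j hj
          rw [Finset.disjoint_biUnion_right]
          intro j' hj'
          simp only [Finset.mem_filter, Finset.mem_univ, true_and] at hj hj'
          apply hA1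
          rintro rfl
          exact hkl (hj.symm.trans hj')
        · ext b
          have hb : b ∈ Finset.univ.biUnion A := by rw [hA2]; simp
          simp only [Finset.mem_biUnion, Finset.mem_univ, true_and, iff_true] at hb ⊢
          obtain ⟨j, hj⟩ := hb
          exact ⟨g j, Finset.mem_biUnion.mpr ⟨j, by simp, hj⟩⟩
      unfold WMMS
      refine le_trans (csInf_le ?_ (Exists.intro B (And.intro hB rfl))) ?_
      · refine Exists.intro 0 ?_
        rintro y ⟨C, -, rfl⟩
        exact Real.iSup_nonneg fun j => mul_nonneg (hcost (rep i) _)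
          (div_nonneg (mul_pos hb (hw _)).le (mul_pos hb (hw _)).le)
      · apply ciSup_le
        intro k
        have hk := hw (rep k)
        rw [mul_div_mul_left _ _ hb.ne', ← mul_div_assoc, div_le_iff₀ hk]
        have e : costOf V' i (B k) = ∑ j ∈ Finset.univ.filter (fun j => g j = k),
            costOf V (rep i) (A j) :=
          Finset.sum_biUnion fun j _ l _ hjl => hA1 j l hjl
        rw [e, Finset.sum_mul]
        calc _ ≤ ∑ j ∈ Finset.univ.filter (fun j => g j = k), x * w j := by
              apply Finset.sum_le_sum
              intro j _
              have := hAx j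
              rwa [← mul_div_assoc, div_le_iff₀ (hw j)] at this
          _ = x * ∑ j ∈ Finset.univ.filter (fun j => g j = k), w j := by
              rw [Finset.mul_sum]
          _ ≤ x * (α * w (rep k)) := mul_le_mul_of_nonneg_left (hgroup k) hx0
          _ = _ := by ring
  obtain ⟨S', ⟨hS1, hS2⟩, hS3⟩ := hreduced m V' (fun i b => hV _ b)
  let S : Fin n → Finset (Fin m) := fun j =>
    (Finset.univ.filter (fun k => rep k = j)).biUnion S'
  refine ⟨S, ⟨?_, ?_⟩, ?_⟩
  · intro k l hkl
    rw [Finset.disjoint_biUnion_left]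
    intro j hj
    rw [Finset.disjoint_biUnion_right]
    intro j' hj'
    simp only [Finset.mem_filter, Finset.mem_univ, true_and] at hj hj'
    apply hS1
    rintro rfl
    exact hkl (hj.symm.trans hj')
  · ext b
    have hb : b ∈ Finset.univ.biUnion S' := by rw [hS2]; simp
    simp only [Finset.mem_biUnion, Finset.mem_univ, true_and, iff_true] at hb ⊢
    obtain ⟨j, hj⟩ := hb
    exact ⟨rep j, Finset.mem_biUnion.mpr ⟨j, by simp, hj⟩⟩
  · intro j
    by_cases h : ∃ k, rep k = j
    · obtain ⟨k, rfl⟩ := h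
      have e : S (rep k) = S' k := by
        have : Finset.univ.filter (fun l => rep l = rep k) = {k} := by
          ext l
          simp [hrep.eq_iff]
        simp only [S, this, Finset.singleton_biUnion]
      rw [e]
      calc costOf V (rep k) (S' k) ≤ γ * WMMS V' (fun i => β * w (rep i)) k := hS3 k
        _ ≤ γ * (α * WMMS V w (rep k)) :=
            mul_le_mul_of_nonneg_left (key k) (by linarith)
        _ = _ := by ring
    · have e : S j = ∅ := by
        have : Finset.univ.filter (fun l => rep l = j) = ∅ := by
          ext l
          simp only [Finset.mem_filter, Finset.mem_univ, true_and, Finset.notMem_empty, iff_false]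
          exact fun hl => h ⟨l, hl⟩
        simp only [S, this, Finset.biUnion_empty]
      rw [e]
      have : costOf V j ∅ = 0 := Finset.sum_empty
      rw [this]
      exact mul_nonneg (mul_nonneg hαpos.le (by linarith)) (hW0 j)
end

section
/- Let w_1, w_2, …, w_n be the entitlements of n agents and let γ ≥ 1. If every instance of the chore division problem with n agents and equal entitlements (1/n, …, 1/n) admits a γ-MMS assignment (an assignment in which every agent i receives a bundle of cost at most γ·MMS_i), then every instance with n agents and entitlements (w_1, …, w_n) admits a (γ·(max_i w_i)/(min_i w_i))-WMMS assignment. -/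
open Finset

/-- Lemma red2: if every instance with `n` agents and equal
entitlements admits a `γ`-MMS assignment, then every instance with `n` agents and
entitlements `w` admits a `(γ·(max wᵢ)/(min wᵢ))`-WMMS assignment. -/
theorem symmetric_to_asymmetric_WMMS (n : ℕ) (w : Fin n → ℝ) (γ : ℝ)
    (hγ : 1 ≤ γ) (hw : ∀ i, 0 < w i) (hw1 : ∀ i, w i ≤ 1)
    (hsum : ∑ i, w i = 1)
    (hsym : ∀ (m : ℕ) (V : Fin n → Fin m → ℝ), (∀ i b, 0 ≤ V i b) →
      ∃ S : Fin n → Finset (Fin m), IsPartition S ∧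
        ∀ i, costOf V i (S i) ≤ γ * MMS V i) :
    ∀ (m : ℕ) (V : Fin n → Fin m → ℝ), (∀ i b, 0 ≤ V i b) →
      ∃ S : Fin n → Finset (Fin m), IsPartition S ∧
        ∀ i, costOf V i (S i) ≤ γ * ((⨆ j, w j) / (⨅ j, w j)) * WMMS V w i := by
  intro m V hV
  obtain ⟨S, hS, hSc⟩ := hsym m V hV
  refine ⟨S, hS, fun i => (hSc i).trans ?_⟩
  rw [mul_assoc]
  refine mul_le_mul_of_nonneg_left ?_ (by linarith)
  have hne : Nonempty (Fin n) := ⟨i⟩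
  obtain ⟨j0, hj0⟩ := exists_eq_ciInf_of_finite (f := w)
  have hmin : 0 < ⨅ j, w j := hj0 ▸ hw j0
  have hle : ∀ j, (⨅ j, w j) ≤ w j := fun j => ciInf_le (Set.finite_range w).bddBelow j
  have hge : ∀ j, w j ≤ ⨆ j, w j := fun j => le_ciSup (Set.finite_range w).bddAbove j
  have hmax : 0 < ⨆ j, w j := (hw i).trans_le (hge i)
  have hR : 0 < (⨆ j, w j) / (⨅ j, w j) := div_pos hmax hmin
  have hc : ∀ T : Finset (Fin m), 0 ≤ costOf V i T :=
    fun T => Finset.sum_nonneg fun b _ => hV i b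
  rw [← div_le_iff₀' hR]
  unfold WMMS
  refine le_csInf ⟨_, S, hS, rfl⟩ ?_
  rintro x ⟨A, hA, rfl⟩
  rw [div_le_iff₀' hR]
  have h1 : MMS V i ≤ ⨆ j, costOf V i (A j) := by
    refine csInf_le ⟨0, ?_⟩ ⟨A, hA, rfl⟩
    rintro x ⟨B, _, rfl⟩
    exact Real.iSup_nonneg fun j => hc _
  refine h1.trans (ciSup_le fun j => ?_)
  have h2 : costOf V i (A j) * (w i / w j) ≤ ⨆ j, costOf V i (A j) * (w i / w j) :=
    le_ciSup (f := fun j => costOf V i (A j) * (w i / w j)) (Set.finite_range _).bddAbove j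
  have h3 : w j / w i ≤ (⨆ j, w j) / (⨅ j, w j) :=
    div_le_div₀ hmax.le (hge j) hmin (hle i)
  have hi := hw i
  have hj := hw j
  calc costOf V i (A j) = (w j / w i) * (costOf V i (A j) * (w i / w j)) := by
        field_simp
    _ ≤ _ := mul_le_mul h3 h2 (mul_nonneg (hc _) (div_pos hi hj).le) hR.le
end

section
/- Let k = (√3+1)/2 and c = (13 + 13√3 + √(2236 + 1898√3))/52 (so c ≈ 2.1122). Assume that (i) every instance of the chore division problem with two agents (arbitrary entitlements) admits a k-WMMS assignment, and (ii) every instance with three agents and equal entitlements (1/3, 1/3, 1/3) admits a (15/13)-MMS assignment. Then every instance of the asymmetric chore division problem with three agents admits a c-WMMS assignment. -/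
open Finset

lemma wmms_attain {n m : ℕ} (V : Fin n → Fin m → ℝ) (w : Fin n → ℝ) (i : Fin n) :
    ∃ A : Fin n → Finset (Fin m), IsPartition A ∧
      ∀ j, costOf V i (A j) * (w i / w j) ≤ WMMS V w i := by
  have hne : Set.Nonempty { x | ∃ A : Fin n → Finset (Fin m), IsPartition A ∧
      x = ⨆ j, costOf V i (A j) * (w i / w j) } := by
    refine ⟨_, fun j => if j = i then Finset.univ else ∅, ⟨?_, ?_⟩, rfl⟩
    · intro j k hjk
      by_cases h : j = i
      · have : k ≠ i := fun h' => hjk (h.trans h'.symm)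
        simp [this]
      · simp [h]
    · ext b
      simp only [Finset.mem_biUnion, Finset.mem_univ, true_and, iff_true]
      exact ⟨i, by simp⟩
  have hfin : Set.Finite { x | ∃ A : Fin n → Finset (Fin m), IsPartition A ∧
      x = ⨆ j, costOf V i (A j) * (w i / w j) } := by
    refine (Set.finite_range (fun A : Fin n → Finset (Fin m) =>
      ⨆ j, costOf V i (A j) * (w i / w j))).subset ?_
    rintro x ⟨A, _, rfl⟩
    exact ⟨A, rfl⟩
  obtain ⟨A, hA, hx⟩ := hne.csInf_mem hfin
  refine ⟨A, hA, fun j => ?_⟩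
  unfold WMMS
  rw [hx]
  exact le_ciSup (f := fun j => costOf V i (A j) * (w i / w j)) (Set.finite_range _).bddAbove j

lemma wmms_le {n m : ℕ} (V : Fin n → Fin m → ℝ) (w : Fin n → ℝ) (i : Fin n)
    (A : Fin n → Finset (Fin m)) (hA : IsPartition A) (x : ℝ)
    (h : ∀ j, costOf V i (A j) * (w i / w j) ≤ x) : WMMS V w i ≤ x := by
  have hfin : Set.Finite { x | ∃ A : Fin n → Finset (Fin m), IsPartition A ∧
      x = ⨆ j, costOf V i (A j) * (w i / w j) } := by
    refine (Set.finite_range (fun A : Fin n → Finset (Fin m) =>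
      ⨆ j, costOf V i (A j) * (w i / w j))).subset ?_
    rintro x ⟨A, _, rfl⟩
    exact ⟨A, rfl⟩
  haveI : Nonempty (Fin n) := ⟨i⟩
  exact (csInf_le hfin.bddBelow ⟨A, hA, rfl⟩).trans (ciSup_le h)

lemma costOf_nonneg {n m : ℕ} (V : Fin n → Fin m → ℝ) (hV : ∀ i b, 0 ≤ V i b) (i : Fin n)
    (S : Finset (Fin m)) : 0 ≤ costOf V i S :=
  Finset.sum_nonneg fun b _ => hV i b

lemma wmms_nonneg {n m : ℕ} (V : Fin n → Fin m → ℝ) (hV : ∀ i b, 0 ≤ V i b)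
    (w : Fin n → ℝ) (hw : ∀ i, 0 < w i) (i : Fin n) : 0 ≤ WMMS V w i := by
  obtain ⟨A, _, h⟩ := wmms_attain V w i
  exact (mul_nonneg (costOf_nonneg V hV i _) (div_pos (hw i) (hw i)).le).trans (h i)

lemma mms_eq {n m : ℕ} (V : Fin n → Fin m → ℝ) (i : Fin n) :
    MMS V i = WMMS V (fun _ => 1) i := by
  simp [MMS, WMMS]

lemma attain' {n m : ℕ} (V : Fin n → Fin m → ℝ) 
    (w : Fin n → ℝ) (hw : ∀ i, 0 < w i) (i : Fin n) :
    ∃ A : Fin n → Finset (Fin m), IsPartition A ∧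
      ∀ j, costOf V i (A j) * w i ≤ WMMS V w i * w j := by
  obtain ⟨A, hA, h⟩ := wmms_attain V w i
  refine ⟨A, hA, fun j => ?_⟩
  have := h j
  rwa [← mul_div_assoc, div_le_iff₀ (hw j)] at this

/-- equal-entitlement comparison -/
lemma mms_le {n m : ℕ} (V : Fin n → Fin m → ℝ) (hV : ∀ i b, 0 ≤ V i b)
    (w : Fin n → ℝ) (hw : ∀ i, 0 < w i) (lo hi : ℝ) (hlo : 0 < lo)
    (h1 : ∀ i, lo ≤ w i) (h2 : ∀ i, w i ≤ hi) (i : Fin n) :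
    MMS V i ≤ WMMS V w i * (hi / lo) := by
  obtain ⟨A, hA, h⟩ := attain' V w hw i
  rw [mms_eq]
  refine wmms_le V _ i A hA _ fun j => ?_
  simp only [div_one, mul_one]
  rw [← mul_div_assoc, le_div_iff₀ hlo]
  calc costOf V i (A j) * lo ≤ costOf V i (A j) * w i :=
        mul_le_mul_of_nonneg_left (h1 i) (costOf_nonneg V hV i _)
    _ ≤ _ := h j
    _ ≤ _ := mul_le_mul_of_nonneg_left (h2 j) (wmms_nonneg V hV w hw i)

/-- two-agent reduction -/
lemma two_le {m : ℕ} (V : Fin 3 → Fin m → ℝ) (hV : ∀ i b, 0 ≤ V i b)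
    (w : Fin 3 → ℝ) (hw : ∀ i, 0 < w i) (σ : Equiv.Perm (Fin 3)) (s : ℝ) (hs : 0 < s)
    (i : Fin 2) :
    WMMS (fun j : Fin 2 => V (σ j.succ)) (fun j : Fin 2 => w (σ j.succ) / s) i
      ≤ WMMS V w (σ i.succ) * (1 + w (σ 0) / w (σ 2)) := by
  obtain ⟨A, hA, h⟩ := attain' V w hw (σ i.succ)
  have hM := wmms_nonneg V hV w hw (σ i.succ)
  have key : ∀ T : Finset (Fin m),
      costOf (fun j : Fin 2 => V (σ j.succ)) i T = costOf V (σ i.succ) T := fun T => rfl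
  have hd : Disjoint (A (σ 2)) (A (σ 0)) := hA.1 _ _ (by simp)
  refine wmms_le _ _ i ![A (σ 1), A (σ 2) ∪ A (σ 0)] ⟨?_, ?_⟩ _ ?_
  · have h12 : Disjoint (A (σ 1)) (A (σ 2)) := hA.1 _ _ (by simp)
    have h10 : Disjoint (A (σ 1)) (A (σ 0)) := hA.1 _ _ (by simp)
    have : Disjoint (A (σ 1)) (A (σ 2) ∪ A (σ 0)) := Finset.disjoint_union_right.2 ⟨h12, h10⟩
    intro j k hjk
    fin_cases j <;> fin_cases k
    · exact absurd rfl hjk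
    · exact this
    · exact this.symm
    · exact absurd rfl hjk
  · ext b
    have hb : b ∈ Finset.univ.biUnion A := by rw [hA.2]; exact Finset.mem_univ _
    obtain ⟨j, -, hj⟩ := Finset.mem_biUnion.1 hb
    obtain ⟨l, rfl⟩ := σ.surjective j
    simp only [Finset.mem_biUnion, Finset.mem_univ, true_and, iff_true]
    fin_cases l
    · exact ⟨1, Finset.mem_union_right _ hj⟩
    · exact ⟨0, hj⟩
    · exact ⟨1, Finset.mem_union_left _ hj⟩
  · intro j
    have e : w (σ i.succ) / s / (w (σ j.succ) / s) = w (σ i.succ) / w (σ j.succ) := by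
      field_simp
    show _ * (w (σ i.succ) / s / (w (σ j.succ) / s)) ≤ _
    rw [e, key, ← mul_div_assoc, div_le_iff₀ (hw _)]
    have p2 := hw (σ 2)
    have p0 := hw (σ 0)
    fin_cases j
    · show costOf V (σ i.succ) (A (σ 1)) * w (σ i.succ) ≤ _ * w (σ 1)
      refine (h (σ 1)).trans (mul_le_mul_of_nonneg_right ?_ (hw _).le)
      have : 0 ≤ w (σ 0) / w (σ 2) := by positivity
      nlinarith
    · show costOf V (σ i.succ) (A (σ 2) ∪ A (σ 0)) * w (σ i.succ) ≤ _ * w (σ 2)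
      have hu : costOf V (σ i.succ) (A (σ 2) ∪ A (σ 0))
          = costOf V (σ i.succ) (A (σ 2)) + costOf V (σ i.succ) (A (σ 0)) :=
        Finset.sum_union hd
      have : WMMS V w (σ i.succ) * (1 + w (σ 0) / w (σ 2)) * w (σ 2)
          = WMMS V w (σ i.succ) * w (σ 2) + WMMS V w (σ i.succ) * w (σ 0) := by
        field_simp
      rw [hu, this, add_mul]
      exact add_le_add (h _) (h _)

/-- Theorem for three agents: assuming the two-agent
`k`-WMMS guarantee (`k = (√3+1)/2`) and the symmetric three-agent `(15/13)`-MMS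
guarantee, every three-agent instance admits a `c`-WMMS assignment, where
`c = (13 + 13√3 + √(2236 + 1898√3))/52 ≈ 2.1122`. -/
theorem three_agent_WMMS (k c : ℝ)
    (hk : k = (Real.sqrt 3 + 1) / 2)
    (hc : c = (13 + 13 * Real.sqrt 3 + Real.sqrt (2236 + 1898 * Real.sqrt 3)) / 52)
    (h2 : ∀ (m : ℕ) (V : Fin 2 → Fin m → ℝ) (w : Fin 2 → ℝ),
      (∀ i b, 0 ≤ V i b) → (∀ i, 0 < w i) → (∀ i, w i ≤ 1) → (∑ i, w i = 1) →
      ∃ S : Fin 2 → Finset (Fin m), IsPartition S ∧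
        ∀ i, costOf V i (S i) ≤ k * WMMS V w i)
    (h3 : ∀ (m : ℕ) (V : Fin 3 → Fin m → ℝ), (∀ i b, 0 ≤ V i b) →
      ∃ S : Fin 3 → Finset (Fin m), IsPartition S ∧
        ∀ i, costOf V i (S i) ≤ (15 / 13) * MMS V i) :
    ∀ (m : ℕ) (V : Fin 3 → Fin m → ℝ) (w : Fin 3 → ℝ),
      (∀ i b, 0 ≤ V i b) → (∀ i, 0 < w i) → (∀ i, w i ≤ 1) → (∑ i, w i = 1) →
      ∃ S : Fin 3 → Finset (Fin m), IsPartition S ∧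
        ∀ i, costOf V i (S i) ≤ c * WMMS V w i := by
  intro m V w hV hw hw1 hsum
  have h3p : 0 < Real.sqrt 3 := by positivity
  have h3s : Real.sqrt 3 * Real.sqrt 3 = 3 := Real.mul_self_sqrt (by norm_num)
  have hDs := Real.mul_self_sqrt (show 0 ≤ 2236 + 1898 * Real.sqrt 3 by positivity)
  have hkp : 0 < k := by rw [hk]; positivity
  have hcp : 0 < c := by rw [hc]; positivity
  have hq : c * c = k * (c + 15 / 13) := by
    rw [hc, hk]
    nlinarith
  clear hk hc h3p h3s hDs
  have hmono := Tuple.monotone_sort w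
  set σ := Tuple.sort w with hσ
  have m02 : ∀ i, w (σ 0) ≤ w i := fun i => by
    have := hmono (Fin.zero_le (σ.symm i))
    simpa using this
  have m2 : ∀ i, w i ≤ w (σ 2) := fun i => by
    have := hmono (Fin.le_last (σ.symm i))
    simpa using this
  have p0 := hw (σ 0)
  have p2 := hw (σ 2)
  by_cases hcase : 15 / 13 * (w (σ 2) / w (σ 0)) ≤ c
  · obtain ⟨S, hS, h⟩ := h3 m V hV
    refine ⟨S, hS, fun i => (h i).trans ?_⟩
    have h1 := mms_le V hV w hw _ _ p0 m02 m2 i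
    have hM := wmms_nonneg V hV w hw i
    nlinarith
  · have hcase' : k * (1 + w (σ 0) / w (σ 2)) ≤ c := by
      push Not at hcase
      rw [← mul_div_assoc, lt_div_iff₀ p0] at hcase
      have h1 : w (σ 0) / w (σ 2) ≤ 15 / 13 / c := by
        rw [div_le_div_iff₀ p2 hcp]; linarith
      calc k * (1 + w (σ 0) / w (σ 2)) ≤ k * (1 + 15 / 13 / c) := by gcongr
        _ = c := by field_simp; linarith
    have hs : 0 < w (σ 1) + w (σ 2) := add_pos (hw _) (hw _)
    obtain ⟨S, hS, h⟩ := h2 m (fun j => V (σ j.succ))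
      (fun j => w (σ j.succ) / (w (σ 1) + w (σ 2))) (fun i b => hV _ b)
      (fun i => div_pos (hw _) hs)
      (fun i => by
        rw [div_le_one hs]
        have := hw (σ 1)
        fin_cases i
        · show w (σ 1) ≤ _
          linarith
        · show w (σ 2) ≤ _
          linarith)
      (by
        rw [Fin.sum_univ_two]
        show w (σ 1) / _ + w (σ 2) / _ = 1
        field_simp)
    refine ⟨fun i => (Fin.cons ∅ S : Fin 3 → Finset (Fin m)) (σ.symm i), ⟨?_, ?_⟩, ?_⟩
    · intro j l hjl
      have hne : σ.symm j ≠ σ.symm l := fun e => hjl (σ.symm.injective e)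
      show Disjoint ((Fin.cons ∅ S : Fin 3 → Finset (Fin m)) (σ.symm j))
        ((Fin.cons ∅ S : Fin 3 → Finset (Fin m)) (σ.symm l))
      generalize σ.symm j = a at hne ⊢
      generalize σ.symm l = b at hne ⊢
      refine Fin.cases ?_ (fun a hne => ?_) a hne
      · intro _; simp
      · refine Fin.cases ?_ (fun b hne => ?_) b hne
        · intro _; simp
        · simpa using hS.1 a b (fun e => hne (by rw [e]))
    · ext b
      have hb : b ∈ Finset.univ.biUnion S := by rw [hS.2]; exact Finset.mem_univ _
      obtain ⟨j, -, hj⟩ := Finset.mem_biUnion.1 hb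
      simp only [Finset.mem_biUnion, Finset.mem_univ, true_and, iff_true]
      exact ⟨σ j.succ, by simpa using hj⟩
    · intro i
      obtain ⟨l, rfl⟩ := σ.surjective i
      have hM := wmms_nonneg V hV w hw (σ l)
      simp only [Equiv.symm_apply_apply]
      revert hM
      refine Fin.cases ?_ (fun l => ?_) l
      · intro hM
        simpa [costOf] using mul_nonneg hcp.le hM
      · intro hM
        rw [Fin.cons_succ]
        refine (h l).trans ?_
        have h1 := two_le V hV w hw σ _ hs l
        calc _ ≤ k * (WMMS V w (σ l.succ) * (1 + w (σ 0) / w (σ 2))) :=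
              mul_le_mul_of_nonneg_left h1 hkp.le
          _ = k * (1 + w (σ 0) / w (σ 2)) * WMMS V w (σ l.succ) := by ring
          _ ≤ _ := mul_le_mul_of_nonneg_right hcase' hM
end

section
/- Let k = (√3+1)/2 and c = (13k + √(169k² + 780k))/26, i.e., the positive root of 13x² − 13kx − 15k = 0. Then for all real numbers w_1, w_2, w_3 with 0 < w_1 ≤ w_2 ≤ w_3 and w_1 + w_2 + w_3 = 1, we have min( (w_1 + w_3)·k/w_3 , 15·w_3/(13·w_1) ) ≤ c. -/
/-- with `k = (√3+1)/2` and `c` the positive root of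
`13x² − 13kx − 15k = 0`, for all `0 < w₁ ≤ w₂ ≤ w₃` with `w₁ + w₂ + w₃ = 1` we
have `min((w₁+w₃)·k/w₃, 15·w₃/(13·w₁)) ≤ c`. -/
theorem three_agent_arith (k c : ℝ)
    (hk : k = (Real.sqrt 3 + 1) / 2)
    (hc : c = (13 * k + Real.sqrt (169 * k ^ 2 + 780 * k)) / 26) :
    ∀ w1 w2 w3 : ℝ, 0 < w1 → w1 ≤ w2 → w2 ≤ w3 → w1 + w2 + w3 = 1 →
      min ((w1 + w3) * k / w3) (15 * w3 / (13 * w1)) ≤ c := by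
  intro w1 w2 w3 h1 h12 h23 _
  have h3 : 0 < w3 := by linarith
  have hk0 : 0 < k := by rw [hk]; positivity
  have hc0 : 0 < c := by rw [hc]; positivity
  have hs : Real.sqrt (169 * k ^ 2 + 780 * k) ^ 2 = 169 * k ^ 2 + 780 * k :=
    Real.sq_sqrt (by positivity)
  have hroot : 13 * c ^ 2 = 13 * k * c + 15 * k := by
    have e : Real.sqrt (169 * k ^ 2 + 780 * k) = 26 * c - 13 * k := by linarith
    rw [e] at hs
    linarith
  by_contra hcon
  rw [not_le, lt_min_iff, lt_div_iff₀ h3, lt_div_iff₀ (by positivity)] at hcon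
  obtain ⟨ha, hb⟩ := hcon
  have ha' := mul_lt_mul_of_pos_left ha (show 0 < 13 * c by positivity)
  have hb' := mul_lt_mul_of_pos_left hb hk0
  have hr : 13 * c ^ 2 * w3 = (13 * k * c + 15 * k) * w3 := by rw [hroot]
  linarith
end

section
/- Let k = (√3+1)/2 and let c > k satisfy 1/c + 20/(17c²) + 40/(17c²·(2c/(√3+1) − 1)) = 1. Then for all real numbers w_1, w_2, w_3, w_4 with 0 < w_1 ≤ w_2 ≤ w_3 ≤ w_4, w_1 + w_2 + w_3 + w_4 = 1, and w_1/w_3 ≥ w_2/w_4, we have min( 1/w_4 , ((w_1 + w_3)/w_3)·k , (20/17)·(w_4/w_1) ) ≤ c. -/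
/-- with `k = (√3+1)/2` and `c > k` satisfying
`1/c + 20/(17c²) + 40/(17c²(2c/(√3+1)−1)) = 1`, for all
`0 < w₁ ≤ w₂ ≤ w₃ ≤ w₄` summing to `1` with `w₁/w₃ ≥ w₂/w₄`, we have
`min(1/w₄, ((w₁+w₃)/w₃)·k, (20/17)·(w₄/w₁)) ≤ c`. -/
theorem four_agent_arith_case1 (k c : ℝ)
    (hk : k = (Real.sqrt 3 + 1) / 2) (hck : k < c)
    (hc : 1 / c + 20 / (17 * c ^ 2) +
      40 / (17 * c ^ 2 * (2 * c / (Real.sqrt 3 + 1) - 1)) = 1) :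
    ∀ w1 w2 w3 w4 : ℝ, 0 < w1 → w1 ≤ w2 → w2 ≤ w3 → w3 ≤ w4 →
      w1 + w2 + w3 + w4 = 1 → w2 / w4 ≤ w1 / w3 →
      min (min (1 / w4) ((w1 + w3) / w3 * k)) (20 / 17 * (w4 / w1)) ≤ c := by
  intro w1 w2 w3 w4 h1 h12 h23 h34 hsum _
  by_contra hcon
  rw [not_le, lt_min_iff, lt_min_iff] at hcon
  obtain ⟨⟨ha, hb⟩, hd⟩ := hcon
  have hs : 0 ≤ Real.sqrt 3 := Real.sqrt_nonneg 3
  have hk0 : 0 < k := by rw [hk]; linarith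
  have hc0 : 0 < c := hk0.trans hck
  have h3 : 0 < w3 := by linarith
  have h4 : 0 < w4 := by linarith
  have ht : 2 * c / (Real.sqrt 3 + 1) - 1 = c / k - 1 := by
    rw [hk]; field_simp
  rw [ht] at hc
  have ht0 : 0 < c / k - 1 := by
    have := (one_lt_div hk0).2 hck
    linarith
  have hw3 : (c / k - 1) * w3 < w1 := by
    have e : (w1 + w3) / w3 * k = (w1 + w3) * k / w3 := by ring
    rw [e, lt_div_iff₀ h3] at hb
    have : c * w3 / k < w1 + w3 := by rwa [div_lt_iff₀ hk0]
    have e2 : (c / k - 1) * w3 = c * w3 / k - w3 := by ring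
    linarith
  generalize c / k - 1 = t at *
  have hw4 : w4 < 1 / c := by
    rw [lt_div_iff₀ h4] at ha
    rw [lt_div_iff₀ hc0]; linarith
  have hw1 : w1 < 20 / (17 * c ^ 2) := by
    have e : 20 / 17 * (w4 / w1) = (20 / 17 * w4) / w1 := by ring
    rw [e, lt_div_iff₀ h1] at hd
    rw [lt_div_iff₀ hc0] at hw4
    rw [lt_div_iff₀ (by positivity)]
    nlinarith
  have hw3' : w3 < 20 / (17 * c ^ 2) / t := by
    rw [lt_div_iff₀ ht0]; linarith
  have e : 40 / (17 * c ^ 2 * t) = 2 * (20 / (17 * c ^ 2) / t) := by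
    field_simp; norm_num
  rw [e] at hc
  linarith
end

section
/- For all real numbers w_1, w_2, w_3, w_4 with 0 < w_1 ≤ w_2 ≤ w_3 ≤ w_4, w_1 + w_2 + w_3 + w_4 = 1, and w_1/w_3 < w_2/w_4, we have min( ((w_2 + w_4)/w_4)·(w_4/w_3) , ((w_2 + w_4)/w_4)·((√3+1)/2) ) ≤ 2.5. -/
/-- for all `0 < w₁ ≤ w₂ ≤ w₃ ≤ w₄` summing to `1` with
`w₁/w₃ < w₂/w₄`, we have
`min(((w₂+w₄)/w₄)·(w₄/w₃), ((w₂+w₄)/w₄)·((√3+1)/2)) ≤ 2.5`. -/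
theorem four_agent_arith_case2 :
    ∀ w1 w2 w3 w4 : ℝ, 0 < w1 → w1 ≤ w2 → w2 ≤ w3 → w3 ≤ w4 →
      w1 + w2 + w3 + w4 = 1 → w1 / w3 < w2 / w4 →
      min ((w2 + w4) / w4 * (w4 / w3))
        ((w2 + w4) / w4 * ((Real.sqrt 3 + 1) / 2)) ≤ 2.5 := by
  intro w1 w2 w3 w4 h1 h12 h23 h34 _ _
  have p2 : 0 < w2 := by linarith
  have p3 : 0 < w3 := by linarith
  have p4 : 0 < w4 := by linarith
  by_cases h : w2 + w4 ≤ 5 / 2 * w3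
  · apply min_le_of_left_le
    have e : (w2 + w4) / w4 * (w4 / w3) = (w2 + w4) / w3 := by field_simp
    rw [e, div_le_iff₀ p3]
    linarith
  · push Not at h
    apply min_le_of_right_le
    have a : (w2 + w4) / w4 ≤ 5 / 3 := by
      rw [div_le_iff₀ p4]
      linarith
    have b : Real.sqrt 3 ≤ 2 := by
      rw [Real.sqrt_le_left (by norm_num)]
      norm_num
    have c : (Real.sqrt 3 + 1) / 2 ≤ 3 / 2 := by linarith
    calc (w2 + w4) / w4 * ((Real.sqrt 3 + 1) / 2) ≤ 5 / 3 * (3 / 2) := by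
          apply mul_le_mul a c (by positivity) (by norm_num)
      _ ≤ 2.5 := by norm_num
end
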